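/- arXiv:1403.6539 — 2 statements merged into one kernel-verified Lean document; each statement's English description precedes it below -/
import Mathlib

section
/- The subalgebra of the down-up algebra A(α,β,φ) generated by t₁,…,tₙ is isomorphic to the polynomial ring K[t₁,…,tₙ], and every nonzero polynomial f(t₁,…,tₙ) is a regular central element of A(α,β,φ). -/
open MvPolynomial

namespace DownUp

inductive Gen | u | d

variable {K : Type} [Field K] {n : ℕ}

/-- Free algebra over the polynomial base ring on generators u, d. -/
abbrev F (K : Type) [Field K] (n : ℕ) := FreeAlgebra (MvPolynomial (Fin n) K) Gen

noncomputable def uF : F K n := FreeAlgebra.ι _ Gen.u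
noncomputable def dF : F K n := FreeAlgebra.ι _ Gen.d

/-- The defining relations of the down-up algebra over K[t₁,…,tₙ]. -/
inductive Rel (α β : K) (φ : MvPolynomial (Fin n) K) : F K n → F K n → Prop
  | ddu : Rel α β φ (dF * dF * uF)
      (α • (dF * uF * dF) + β • (uF * dF * dF) + algebraMap _ _ φ * dF)
  | duu : Rel α β φ (dF * uF * uF)
      (α • (uF * dF * uF) + β • (uF * uF * dF) + uF * algebraMap _ _ φ)

/-- The down-up algebra A(α,β,φ) over K[t₁,…,tₙ]. -/
abbrev A (α β : K) (φ : MvPolynomial (Fin n) K) := RingQuot (Rel α β φ)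

noncomputable def U (α β : K) (φ : MvPolynomial (Fin n) K) : A α β φ :=
  RingQuot.mkAlgHom K _ uF
noncomputable def D (α β : K) (φ : MvPolynomial (Fin n) K) : A α β φ :=
  RingQuot.mkAlgHom K _ dF

/-- Image of the base polynomial ring in A. -/
noncomputable def T (α β : K) (φ : MvPolynomial (Fin n) K) :
    MvPolynomial (Fin n) K →ₐ[K] A α β φ :=
  (RingQuot.mkAlgHom K (Rel α β φ)).comp (IsScalarTower.toAlgHom K (MvPolynomial (Fin n) K) (F K n))

end DownUp

namespace DownUp

section Model

variable {S : Type} [CommRing S]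

/-- The free module with basis `e (i, a)`, standing for `u ^ i * (d * u) ^ a`. -/
abbrev Mod (S : Type) [CommRing S] := (ℕ × ℕ) →₀ S

noncomputable def bas (i a : ℕ) : Mod S := Finsupp.single (i, a) 1

/-- Left multiplication by `u`. -/
noncomputable def uM : Mod S →ₗ[S] Mod S :=
  Finsupp.linearCombination S (fun p : ℕ × ℕ => bas (p.1 + 1) p.2)

/-- `d * u ^ i * (d * u) ^ a`, where `x` is the value of `d * (d * u) ^ a`. -/
noncomputable def dB (al be ph : S) (x : Mod S) (a : ℕ) : ℕ → Mod S
  | 0 => x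
  | 1 => bas 0 (a + 1)
  | i + 2 => al • uM (dB al be ph x a (i + 1)) + be • uM (uM (dB al be ph x a i))
      + ph • bas (i + 1) a

/-- Left multiplication by `d`, given the values `g a` of `d * (d * u) ^ a`. -/
noncomputable def dG (al be ph : S) (g : ℕ → Mod S) : Mod S →ₗ[S] Mod S :=
  Finsupp.linearCombination S (fun p : ℕ × ℕ => dB al be ph (g p.2) p.2 p.1)

noncomputable def LG (al be ph : S) (g : ℕ → Mod S) (m : Mod S) : Mod S :=
  al • dG al be ph g (uM m) + be • uM (dG al be ph g m) + ph • m

noncomputable def GG (al be ph z : S) : ℕ → ℕ → Mod S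
  | 0 => fun _ => z • bas 0 0
  | n + 1 => fun j => if j ≤ n then GG al be ph z n j
      else LG al be ph (GG al be ph z n) (GG al be ph z n n)

noncomputable def gg (al be ph z : S) (n : ℕ) : Mod S := GG al be ph z n n

/-- The filtration by the exponent of `d * u`. -/
noncomputable def Fil (S : Type) [CommRing S] (n : ℕ) : Submodule S (Mod S) :=
  Finsupp.supported S S {p : ℕ × ℕ | p.2 ≤ n}

lemma bas_mem {i a n : ℕ} (h : a ≤ n) : (bas i a : Mod S) ∈ Fil S n :=
  Finsupp.single_mem_supported S 1 h

@[simp] lemma uM_bas (i a : ℕ) : uM (bas i a : Mod S) = bas (i + 1) a := by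
  simp [uM, bas, Finsupp.linearCombination_single]

@[simp] lemma dG_bas (al be ph : S) (g : ℕ → Mod S) (i a : ℕ) :
    dG al be ph g (bas i a) = dB al be ph (g a) a i := by
  simp [dG, bas, Finsupp.linearCombination_single]

lemma Fil_mono {m n : ℕ} (h : m ≤ n) : Fil S m ≤ Fil S n :=
  Finsupp.supported_mono (fun _ hp => le_trans hp h)

/-- An element of the filtration is a combination of basis elements. -/
lemma Fil_induction {n : ℕ} {P : Mod S → Prop} (h0 : P 0)
    (hadd : ∀ x y, P x → P y → P (x + y))
    (hb : ∀ (c : S) (i a : ℕ), a ≤ n → P (c • bas i a)) {m : Mod S} (hm : m ∈ Fil S n) : P m := by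
  have key : m = ∑ p ∈ m.support, m p • bas p.1 p.2 := by
    conv_lhs => rw [← Finsupp.sum_single m]
    simp [Finsupp.sum, bas]
  rw [key]
  refine Finset.sum_induction _ P hadd h0 ?_
  intro p hp
  exact hb _ _ _ ((Finsupp.mem_supported S m).1 hm hp)

lemma uM_mem {n : ℕ} {m : Mod S} (hm : m ∈ Fil S n) : uM m ∈ Fil S n := by
  refine Fil_induction (P := fun m => uM m ∈ Fil S n) ?_ ?_ ?_ hm
  · simp
  · intro x y hx hy
    rw [map_add]; exact add_mem hx hy
  · intro c i a h
    rw [map_smul, uM_bas]; exact Submodule.smul_mem _ _ (bas_mem h)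

lemma dB_mem (al be ph : S) {x : Mod S} {a n : ℕ} (hx : x ∈ Fil S n) (ha : a + 1 ≤ n) (i : ℕ) :
    dB al be ph x a i ∈ Fil S n := by
  induction i using Nat.twoStepInduction with
  | zero => simpa [dB] using hx
  | one => simpa [dB] using bas_mem ha
  | more i h1 h2 =>
    rw [dB]
    exact add_mem (add_mem (Submodule.smul_mem _ _ (uM_mem h2))
      (Submodule.smul_mem _ _ (uM_mem (uM_mem h1)))) (Submodule.smul_mem _ _ (bas_mem (by omega)))

lemma dG_mem (al be ph : S) {g : ℕ → Mod S} {n : ℕ} (hg : ∀ a ≤ n, g a ∈ Fil S a)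
    {m : Mod S} (hm : m ∈ Fil S n) : dG al be ph g m ∈ Fil S (n + 1) := by
  refine Fil_induction (P := fun m => dG al be ph g m ∈ Fil S (n + 1)) ?_ ?_ ?_ hm
  · simp
  · intro x y hx hy
    rw [map_add]; exact add_mem hx hy
  · intro c i a h
    rw [map_smul, dG_bas]
    exact Submodule.smul_mem _ _ (dB_mem _ _ _ (Fil_mono (by omega) (hg a h)) (by omega) _)

lemma dG_congr (al be ph : S) {g g' : ℕ → Mod S} {n : ℕ} (hg : ∀ a ≤ n, g a = g' a)
    {m : Mod S} (hm : m ∈ Fil S n) : dG al be ph g m = dG al be ph g' m := by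
  refine Fil_induction (P := fun m => dG al be ph g m = dG al be ph g' m) ?_ ?_ ?_ hm
  · simp
  · intro x y hx hy
    rw [map_add, map_add, hx, hy]
  · intro c i a h
    rw [map_smul, map_smul, dG_bas, dG_bas, hg a h]

lemma GG_eq (al be ph z : S) (n : ℕ) : ∀ j ≤ n, GG al be ph z n j = gg al be ph z j := by
  induction n with
  | zero => intro j hj; obtain rfl : j = 0 := by omega
            rfl
  | succ n ih =>
    intro j hj
    rcases Nat.lt_or_ge n j with h | h
    · obtain rfl : j = n + 1 := by omega
      rfl
    · rw [← ih j h]; simp [GG, h]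

lemma gg_succ' (al be ph z : S) (n : ℕ) :
    gg al be ph z (n + 1) = LG al be ph (GG al be ph z n) (gg al be ph z n) := by
  simp [gg, GG]

lemma gg_mem (al be ph z : S) (n : ℕ) : gg al be ph z n ∈ Fil S n := by
  induction n using Nat.strong_induction_on with
  | _ n ih =>
    cases n with
    | zero => exact Submodule.smul_mem _ _ (bas_mem le_rfl)
    | succ n =>
      have hn := ih n (by omega)
      have hg : ∀ a ≤ n, GG al be ph z n a ∈ Fil S a := by
        intro a ha
        rw [GG_eq _ _ _ _ _ _ ha]; exact ih a (by omega)
      rw [gg_succ', LG]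
      exact add_mem (add_mem (Submodule.smul_mem _ _ (dG_mem _ _ _ hg (uM_mem hn)))
        (Submodule.smul_mem _ _ (uM_mem (dG_mem _ _ _ hg hn))))
        (Submodule.smul_mem _ _ (Fil_mono (by omega) hn))

/-- Left multiplication by `d`. -/
noncomputable def dM (al be ph z : S) : Mod S →ₗ[S] Mod S := dG al be ph (gg al be ph z)

lemma gg_succ (al be ph z : S) (n : ℕ) :
    gg al be ph z (n + 1) = al • dM al be ph z (uM (gg al be ph z n))
      + be • uM (dM al be ph z (gg al be ph z n)) + ph • gg al be ph z n := by
  have hn := gg_mem al be ph z n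
  rw [gg_succ', LG, dM, dG_congr al be ph (GG_eq al be ph z n) hn,
    dG_congr al be ph (GG_eq al be ph z n) (uM_mem hn)]

lemma mod_ext {f g : Mod S →ₗ[S] Mod S} (h : ∀ i a, f (bas i a) = g (bas i a)) (m : Mod S) :
    f m = g m := by
  have : f = g := by
    refine Finsupp.lhom_ext' fun p => LinearMap.ext_ring ?_
    exact h p.1 p.2
  rw [this]

lemma rel_duu (al be ph z : S) (m : Mod S) :
    dM al be ph z (uM (uM m)) = al • uM (dM al be ph z (uM m))
      + be • uM (uM (dM al be ph z m)) + ph • uM m := by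
  refine mod_ext (f := dM al be ph z ∘ₗ uM ∘ₗ uM)
    (g := al • (uM ∘ₗ dM al be ph z ∘ₗ uM) + be • (uM ∘ₗ uM ∘ₗ dM al be ph z) + ph • uM) ?_ m
  intro i a
  simp [dM, dB]

lemma rel_ddu (al be ph z : S) (m : Mod S) :
    dM al be ph z (dM al be ph z (uM m)) = al • dM al be ph z (uM (dM al be ph z m))
      + be • uM (dM al be ph z (dM al be ph z m)) + ph • dM al be ph z m := by
  refine mod_ext (f := dM al be ph z ∘ₗ dM al be ph z ∘ₗ uM)
    (g := al • (dM al be ph z ∘ₗ uM ∘ₗ dM al be ph z)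
      + be • (uM ∘ₗ dM al be ph z ∘ₗ dM al be ph z) + ph • dM al be ph z) ?_ m
  intro i a
  simp only [LinearMap.comp_apply, LinearMap.add_apply, LinearMap.smul_apply]
  induction i with
  | zero =>
    have h1 : dM al be ph z (uM (bas 0 a)) = bas 0 (a + 1) := by simp [dM, dB]
    have h2 : ∀ a, dM al be ph z (bas 0 a) = gg al be ph z a := by intro a; simp [dM, dB]
    rw [h1, h2, h2, gg_succ]
  | succ i ih =>
    rw [← uM_bas, rel_duu al be ph z (bas i a)]
    simp only [map_add, map_smul]
    rw [rel_duu al be ph z (dM al be ph z (bas i a)), ih]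
    simp only [map_add, map_smul]

end Model

section Gen

variable {R : Type} [CommRing R]
variable {B : Type} [Ring B] [Algebra R B]

open Polynomial in
/-- The map from the model to any algebra satisfying the relations. -/
noncomputable def th (x y : B) : Mod R[X] →+ B :=
  Finsupp.liftAddHom (fun p : ℕ × ℕ =>
    (AddMonoidHom.mulLeft (x ^ p.1 * (y * x) ^ p.2)).comp (aeval y : R[X] →ₐ[R] B).toRingHom.toAddMonoidHom)

open Polynomial in
lemma th_single (x y : B) (i a : ℕ) (c : R[X]) :
    th x y (Finsupp.single (i, a) c) = x ^ i * (y * x) ^ a * aeval y c := by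
  simp [th]

open Polynomial in
lemma th_bas (x y : B) (i a : ℕ) : th (R := R) x y (bas i a) = x ^ i * (y * x) ^ a := by
  simp [bas, th_single]

open Polynomial in
lemma th_smul (x y : B) (c : R[X]) (m : Mod R[X]) : th x y (c • m) = th x y m * aeval y c := by
  induction m using Finsupp.induction_linear with
  | zero => simp
  | add f g hf hg => rw [smul_add, map_add, map_add, hf, hg, add_mul]
  | single p r =>
    obtain ⟨i, a⟩ := p
    rw [Finsupp.smul_single, th_single, th_single, smul_eq_mul, mul_comm c r, map_mul]
    simp only [mul_assoc]

open Polynomial in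
lemma th_C (x y : B) (c : R) (m : Mod R[X]) : th x y ((Polynomial.C c : R[X]) • m) = c • th x y m := by
  rw [th_smul, Polynomial.aeval_C, ← Algebra.commutes, Algebra.smul_def]

open Polynomial in
lemma th_uM (x y : B) (m : Mod R[X]) : th x y (uM m) = x * th x y m := by
  induction m using Finsupp.induction_linear with
  | zero => simp
  | add f g hf hg => rw [map_add, map_add, map_add, hf, hg, mul_add]
  | single p r =>
    obtain ⟨i, a⟩ := p
    have : (Finsupp.single (i, a) r : Mod R[X]) = r • bas i a := by simp [bas]
    rw [this, map_smul, uM_bas, th_smul, th_smul, th_bas, th_bas, pow_succ']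
    simp only [mul_assoc]

variable (al be ph : R) (x y : B)

open Polynomial in
lemma th_dB_step (m : Mod R[X]) (a : ℕ)
    (h : th (R := R) x y m = y * (y * x) ^ a)
    (hduu : y * x * x = al • (x * y * x) + be • (x * x * y) + ph • x) (i : ℕ) :
    th x y (dB (Polynomial.C al) (Polynomial.C be) (Polynomial.C ph) m a i) = y * (x ^ i * (y * x) ^ a) := by
  induction i using Nat.twoStepInduction with
  | zero => simpa [dB] using h
  | one => simp [dB, th_bas, pow_succ', mul_assoc]
  | more i h1 h2 =>
    rw [dB]
    simp only [map_add, th_C, th_uM, h1, h2, th_bas]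
    have : y * (x ^ (i + 2) * (y * x) ^ a) = (y * x * x) * (x ^ i * (y * x) ^ a) := by
      simp only [pow_succ', mul_assoc]
    rw [this, hduu]
    simp only [add_mul, smul_mul_assoc, pow_succ', mul_assoc]

open Polynomial in
lemma th_dM_of (n : ℕ)
    (hduu : y * x * x = al • (x * y * x) + be • (x * x * y) + ph • x)
    (h : ∀ a ≤ n, th (R := R) x y (gg (Polynomial.C al) (Polynomial.C be) (Polynomial.C ph) Polynomial.X a) = y * (y * x) ^ a)
    {m : Mod R[X]} (hm : m ∈ Fil R[X] n) :
    th x y (dM (Polynomial.C al) (Polynomial.C be) (Polynomial.C ph) Polynomial.X m) = y * th x y m := by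
  refine Fil_induction (P := fun m => th x y (dM (Polynomial.C al) (Polynomial.C be) (Polynomial.C ph) Polynomial.X m) = y * th x y m)
    ?_ ?_ ?_ hm
  · simp
  · intro p q hp hq
    rw [map_add, map_add, map_add, hp, hq, mul_add]
  · intro c i a ha
    rw [map_smul, th_smul, th_smul, dM, dG_bas,
      th_dB_step al be ph x y _ a (h a ha) hduu, th_bas, mul_assoc]

open Polynomial in
lemma th_gg
  (hddu : y * y * x = al • (y * x * y) + be • (x * y * y) + ph • y)
  (hduu : y * x * x = al • (x * y * x) + be • (x * x * y) + ph • x) (n : ℕ) :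
    th (R := R) x y (gg (Polynomial.C al) (Polynomial.C be) (Polynomial.C ph) Polynomial.X n) = y * (y * x) ^ n := by
  induction n using Nat.strong_induction_on with
  | _ n ih =>
    cases n with
    | zero => simp [gg, GG, th_smul, th_bas]
    | succ n =>
      have hn := gg_mem (Polynomial.C al) (Polynomial.C be) (Polynomial.C ph) (Polynomial.X : R[X]) n
      have hd := fun m (hm : m ∈ Fil R[X] n) =>
        th_dM_of al be ph x y n hduu (fun a ha => ih a (by omega)) hm
      rw [gg_succ]
      simp only [map_add, th_C, th_uM]
      rw [hd _ hn, hd _ (uM_mem hn), th_uM, ih n (by omega)]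
      have : y * (y * x) ^ (n + 1) = (y * y * x) * (y * x) ^ n := by
        simp only [pow_succ', mul_assoc]
      rw [this, hddu]
      simp only [add_mul, smul_mul_assoc, mul_assoc]

open Polynomial in
lemma th_dM
  (hddu : y * y * x = al • (y * x * y) + be • (x * y * y) + ph • y)
  (hduu : y * x * x = al • (x * y * x) + be • (x * x * y) + ph • x) (m : Mod R[X]) :
    th x y (dM (Polynomial.C al) (Polynomial.C be) (Polynomial.C ph) Polynomial.X m) = y * th x y m := by
  induction m using Finsupp.induction_linear with
  | zero => simp
  | add f g hf hg => rw [map_add, map_add, map_add, hf, hg, mul_add]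
  | single p r =>
    refine th_dM_of al be ph x y p.2 hduu (fun a _ => th_gg al be ph x y hddu hduu a) ?_
    exact Finsupp.single_mem_supported _ _ (le_refl p.2)

end Gen

section Main

variable {K : Type} [Field K] {n : ℕ} (α β : K) (φ : MvPolynomial (Fin n) K)

lemma T_eq (f : MvPolynomial (Fin n) K) :
    T α β φ f = algebraMap (MvPolynomial (Fin n) K) (A α β φ) f := by
  rw [T, AlgHom.comp_apply, IsScalarTower.toAlgHom_apply]
  rw [← AlgHom.commutes (RingQuot.mkAlgHom (MvPolynomial (Fin n) K) (Rel α β φ)) f]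
  rw [← AlgHom.coe_toRingHom, ← AlgHom.coe_toRingHom, RingQuot.mkAlgHom_coe, RingQuot.mkAlgHom_coe]

lemma smul_K (c : K) (a : A α β φ) :
    c • a = (MvPolynomial.C c : MvPolynomial (Fin n) K) • a := by
  rw [Algebra.smul_def, Algebra.smul_def, ← T_eq, ← MvPolynomial.algebraMap_eq, AlgHom.commutes]

lemma A_ddu : D α β φ * D α β φ * U α β φ
    = (MvPolynomial.C α : MvPolynomial (Fin n) K) • (D α β φ * U α β φ * D α β φ)
      + (MvPolynomial.C β : MvPolynomial (Fin n) K) • (U α β φ * D α β φ * D α β φ)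
      + φ • D α β φ := by
  have h := RingQuot.mkAlgHom_rel K (Rel.ddu (α := α) (β := β) (φ := φ))
  simp only [map_add, map_mul, map_smul] at h
  rw [← smul_K, ← smul_K, Algebra.smul_def φ, ← T_eq]
  exact h

lemma A_duu : D α β φ * U α β φ * U α β φ
    = (MvPolynomial.C α : MvPolynomial (Fin n) K) • (U α β φ * D α β φ * U α β φ)
      + (MvPolynomial.C β : MvPolynomial (Fin n) K) • (U α β φ * U α β φ * D α β φ)
      + φ • U α β φ := by
  have h := RingQuot.mkAlgHom_rel K (Rel.duu (α := α) (β := β) (φ := φ))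
  simp only [map_add, map_mul, map_smul] at h
  rw [← smul_K, ← smul_K, Algebra.smul_def φ, Algebra.commutes, ← T_eq]
  exact h

open Polynomial in
abbrev SS (K : Type) [Field K] (n : ℕ) := (MvPolynomial (Fin n) K)[X]

noncomputable def genM : Gen → Module.End (SS K n) (Mod (SS K n))
  | Gen.u => uM
  | Gen.d => dM (Polynomial.C (MvPolynomial.C α)) (Polynomial.C (MvPolynomial.C β))
      (Polynomial.C φ) Polynomial.X

lemma smulKF (c : K) (a : F K n) :
    c • a = (MvPolynomial.C c : MvPolynomial (Fin n) K) • a := by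
  rw [← MvPolynomial.algebraMap_eq, algebraMap_smul]

lemma smul_CM (r : MvPolynomial (Fin n) K) (m : Mod (SS K n)) :
    r • m = (Polynomial.C r : SS K n) • m := by
  rw [← Polynomial.algebraMap_eq, algebraMap_smul]

set_option synthInstance.maxHeartbeats 400000 in
set_option maxHeartbeats 1000000 in
noncomputable def repM : A α β φ →ₐ[MvPolynomial (Fin n) K]
    Module.End (SS K n) (Mod (SS K n)) :=
  RingQuot.liftAlgHom _ ⟨FreeAlgebra.lift _ (genM α β φ), by
    intro a b h
    cases h with
    | ddu =>
      refine LinearMap.ext fun m => ?_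
      simp only [smulKF, map_add, map_mul, map_smul, uF, dF, FreeAlgebra.lift_ι_apply,
        AlgHom.commutes, genM, Module.End.mul_apply, LinearMap.add_apply, LinearMap.smul_apply,
        Module.algebraMap_end_apply, smul_CM]
      exact rel_ddu _ _ _ _ _
    | duu =>
      refine LinearMap.ext fun m => ?_
      simp only [smulKF, map_add, map_mul, map_smul, uF, dF, FreeAlgebra.lift_ι_apply,
        AlgHom.commutes, genM, Module.End.mul_apply, LinearMap.add_apply, LinearMap.smul_apply,
        Module.algebraMap_end_apply, smul_CM]
      exact rel_duu _ _ _ _ _⟩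

lemma th_rep (a : A α β φ) (m : Mod (SS K n)) :
    th (U α β φ) (D α β φ) (repM α β φ a m) = a * th (U α β φ) (D α β φ) m := by
  obtain ⟨a, rfl⟩ := RingQuot.mkAlgHom_surjective (MvPolynomial (Fin n) K) (Rel α β φ) a
  have hl : ∀ a : F K n, repM α β φ (RingQuot.mkAlgHom (MvPolynomial (Fin n) K) (Rel α β φ) a)
      = FreeAlgebra.lift _ (genM α β φ) a := fun a => by
    rw [repM, RingQuot.liftAlgHom_mkAlgHom_apply]
  rw [hl]
  induction a using FreeAlgebra.induction generalizing m with
  | grade0 r =>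
    rw [AlgHom.commutes, AlgHom.commutes, Module.algebraMap_end_apply, smul_CM, th_C,
      Algebra.smul_def]
  | grade1 x =>
    rw [FreeAlgebra.lift_ι_apply]
    cases x with
    | u =>
      have : RingQuot.mkAlgHom (MvPolynomial (Fin n) K) (Rel α β φ) (FreeAlgebra.ι _ Gen.u)
          = U α β φ := by
        rw [U, uF, ← AlgHom.coe_toRingHom, ← AlgHom.coe_toRingHom, RingQuot.mkAlgHom_coe,
          RingQuot.mkAlgHom_coe]
      rw [this]
      exact th_uM _ _ _
    | d =>
      have : RingQuot.mkAlgHom (MvPolynomial (Fin n) K) (Rel α β φ) (FreeAlgebra.ι _ Gen.d)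
          = D α β φ := by
        rw [D, dF, ← AlgHom.coe_toRingHom, ← AlgHom.coe_toRingHom, RingQuot.mkAlgHom_coe,
          RingQuot.mkAlgHom_coe]
      rw [this]
      exact th_dM _ _ _ _ _ (A_ddu α β φ) (A_duu α β φ) _
  | mul a b ha hb => rw [map_mul, map_mul, Module.End.mul_apply, ha, hb, mul_assoc]
  | add a b ha hb => rw [map_add, map_add, LinearMap.add_apply, map_add, ha, hb, add_mul]

lemma rep_inj {a : A α β φ} (h : repM α β φ a (bas 0 0) = 0) : a = 0 := by
  have := th_rep α β φ a (bas 0 0)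
  rw [h, th_bas] at this
  simpa using this.symm

lemma T_mul_eq_zero {f : MvPolynomial (Fin n) K} (hf : f ≠ 0) {a : A α β φ}
    (h : T α β φ f * a = 0) : a = 0 := by
  apply rep_inj
  have h2 : repM α β φ (T α β φ f * a) (bas 0 0) = 0 := by rw [h]; simp
  rw [T_eq, map_mul, AlgHom.commutes, Module.End.mul_apply, Module.algebraMap_end_apply,
    smul_CM] at h2
  ext1 p
  have h3 := DFunLike.congr_fun h2 p
  rw [Finsupp.smul_apply, smul_eq_mul, Finsupp.zero_apply, mul_eq_zero] at h3
  exact h3.resolve_left (by simpa using hf)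

lemma T_cancel {f : MvPolynomial (Fin n) K} (hf : f ≠ 0) {a b : A α β φ}
    (h : T α β φ f * a = T α β φ f * b) : a = b := by
  have h2 := congrArg (fun c => repM α β φ c (bas 0 0)) h
  simp only [T_eq, map_mul, AlgHom.commutes, Module.End.mul_apply, Module.algebraMap_end_apply,
    smul_CM] at h2
  have h4 : repM α β φ a (bas 0 0) = repM α β φ b (bas 0 0) := by
    ext1 p
    have h3 := DFunLike.congr_fun h2 p
    rw [Finsupp.smul_apply, Finsupp.smul_apply, smul_eq_mul, smul_eq_mul] at h3
    exact mul_left_cancel₀ (by simpa using hf) h3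
  have h5 := th_rep α β φ a (bas 0 0)
  rw [h4, th_rep, th_bas] at h5
  simpa using h5.symm

lemma A_one_ne : (1 : A α β φ) ≠ 0 := by
  intro h
  have h2 : repM α β φ 1 (bas 0 0) = 0 := by rw [h]; simp
  rw [map_one, Module.End.one_apply, bas, Finsupp.single_eq_zero] at h2
  exact one_ne_zero h2

lemma T_inj : Function.Injective (T α β φ) := by
  rw [injective_iff_map_eq_zero]
  intro f hf
  by_contra hne
  exact A_one_ne α β φ (T_mul_eq_zero α β φ hne (by rw [hf, zero_mul]))

lemma T_range : (T α β φ).range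
    = Algebra.adjoin K (Set.range (fun i : Fin n => T α β φ (MvPolynomial.X i))) := by
  rw [← Algebra.map_top, ← MvPolynomial.adjoin_range_X, AlgHom.map_adjoin, ← Set.range_comp]
  rfl

end Main

end DownUp

open DownUp MvPolynomial in
/-- The subalgebra of A(α,β,φ) generated by t₁,…,tₙ is isomorphic to the
polynomial ring K[t₁,…,tₙ] (with tᵢ corresponding to the variable Xᵢ), and every
nonzero polynomial in the tᵢ is a regular central element of A(α,β,φ). -/
theorem downUp_polynomial_subalgebra {K : Type} [Field K] {n : ℕ}
    (α β : K) (φ : MvPolynomial (Fin n) K) :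
    (∃ e : MvPolynomial (Fin n) K ≃ₐ[K]
        Algebra.adjoin K (Set.range (fun i : Fin n => T α β φ (X i))),
      ∀ i : Fin n, (e (X i) : A α β φ) = T α β φ (X i)) ∧
    ∀ f : MvPolynomial (Fin n) K, f ≠ 0 →
      T α β φ f ∈ Set.center (A α β φ) ∧ IsRegular (T α β φ f) := by
  refine ⟨⟨(AlgEquiv.ofInjective (T α β φ) (T_inj α β φ)).trans
    (Subalgebra.equivOfEq _ _ (T_range α β φ)), fun i => rfl⟩, ?_⟩
  intro f hf
  have hcomm : ∀ a, T α β φ f * a = a * T α β φ f := by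
    intro a
    rw [T_eq, Algebra.commutes]
  refine ⟨Semigroup.mem_center_iff.2 fun a => (hcomm a).symm, ?_, ?_⟩
  · intro a b h
    have h' : T α β φ f * a = T α β φ f * b := h
    exact T_cancel α β φ hf h'
  · intro a b h
    have h' : a * T α β φ f = b * T α β φ f := h
    rw [← hcomm, ← hcomm] at h'
    exact T_cancel α β φ hf h'
end

section
/- If β ≠ 0, then in the down-up algebra A(α,β,φ) the elements ud, du, t₁,…,tₙ are algebraically independent over K; i.e., the subalgebra K[ud, du, t₁,…,tₙ] is a polynomial ring in n+2 indeterminates. -/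
open MvPolynomial

namespace DownUp

variable {K : Type} [Field K] {n : ℕ}

/-- The polynomial ring in x = ud and y = du over the base ring. -/
abbrev S (K : Type) [Field K] (n : ℕ) := MvPolynomial (Fin 2) (MvPolynomial (Fin n) K)

noncomputable def sig (α β : K) (φ : MvPolynomial (Fin n) K) :
    S K n →ₐ[MvPolynomial (Fin n) K] S K n :=
  aeval ![X 1, C (C α) * X 1 + C (C β) * X 0 + C φ]

noncomputable def tau (α β : K) (φ : MvPolynomial (Fin n) K) :
    S K n →ₐ[MvPolynomial (Fin n) K] S K n :=
  aeval ![C (C β⁻¹) * (X 1 - C (C α) * X 0 - C φ), X 0]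

lemma C_C_inv (β : K) (hβ : β ≠ 0) : (C (C β) : S K n) * C (C β⁻¹) = 1 := by
  rw [← C_mul, ← C_mul, mul_inv_cancel₀ hβ, C_1, C_1]

lemma sig_C (α β : K) (φ f : MvPolynomial (Fin n) K) : sig α β φ (C f) = C f :=
  (sig α β φ).commutes f

lemma tau_C (α β : K) (φ f : MvPolynomial (Fin n) K) : tau α β φ (C f) = C f :=
  (tau α β φ).commutes f

lemma sig_X0 (α β : K) (φ : MvPolynomial (Fin n) K) : sig α β φ (X 0) = X 1 := by
  simp [sig]

lemma sig_X1 (α β : K) (φ : MvPolynomial (Fin n) K) :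
    sig α β φ (X 1) = C (C α) * X 1 + C (C β) * X 0 + C φ := by
  simp [sig]

lemma tau_X0 (α β : K) (φ : MvPolynomial (Fin n) K) :
    tau α β φ (X 0) = C (C β⁻¹) * (X 1 - C (C α) * X 0 - C φ) := by
  simp [tau]

lemma tau_X1 (α β : K) (φ : MvPolynomial (Fin n) K) : tau α β φ (X 1) = X 0 := by
  simp [tau]

lemma sig_tau (α β : K) (hβ : β ≠ 0) (φ : MvPolynomial (Fin n) K) (s : S K n) :
    sig α β φ (tau α β φ s) = s := by
  have h : (sig α β φ).comp (tau α β φ) = AlgHom.id _ _ := by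
    apply MvPolynomial.algHom_ext
    intro i
    fin_cases i
    · simp only [AlgHom.comp_apply, Fin.zero_eta, tau_X0, map_mul, map_sub, sig_C, sig_X0, sig_X1,
        AlgHom.id_apply]
      linear_combination (X 0 : S K n) * C_C_inv (n := n) β hβ
    · simp only [AlgHom.comp_apply, Fin.mk_one, tau_X1, sig_X0, AlgHom.id_apply]
  exact DFunLike.congr_fun h s

lemma tau_sig (α β : K) (hβ : β ≠ 0) (φ : MvPolynomial (Fin n) K) (s : S K n) :
    tau α β φ (sig α β φ s) = s := by
  have h : (tau α β φ).comp (sig α β φ) = AlgHom.id _ _ := by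
    apply MvPolynomial.algHom_ext
    intro i
    fin_cases i
    · simp only [AlgHom.comp_apply, Fin.zero_eta, tau_X1, sig_X0, AlgHom.id_apply]
    · simp only [AlgHom.comp_apply, Fin.mk_one, sig_X1, map_mul, map_add, tau_C, tau_X0, tau_X1,
        AlgHom.id_apply]
      linear_combination (X 1 - C (C α) * X 0 - C φ : S K n) * C_C_inv (n := n) β hβ
  exact DFunLike.congr_fun h s

/-- `d` acts as σ and `u` acts as x σ⁻¹. -/
noncomputable def act (α β : K) (φ : MvPolynomial (Fin n) K) :
    Gen → Module.End (MvPolynomial (Fin n) K) (S K n)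
  | Gen.u => LinearMap.mulLeft _ (X 0) ∘ₗ (tau α β φ).toLinearMap
  | Gen.d => (sig α β φ).toLinearMap

noncomputable def rhoF (α β : K) (φ : MvPolynomial (Fin n) K) :
    F K n →ₐ[MvPolynomial (Fin n) K] Module.End (MvPolynomial (Fin n) K) (S K n) :=
  FreeAlgebra.lift _ (act α β φ)

lemma rhoF_u (α β : K) (φ : MvPolynomial (Fin n) K) (s : S K n) :
    rhoF α β φ uF s = X 0 * tau α β φ s := by
  simp [rhoF, uF, act]

lemma rhoF_d (α β : K) (φ : MvPolynomial (Fin n) K) (s : S K n) :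
    rhoF α β φ dF s = sig α β φ s := by
  simp [rhoF, dF, act]

lemma rhoF_C (α β : K) (φ f : MvPolynomial (Fin n) K) (s : S K n) :
    rhoF α β φ (algebraMap _ _ f) s = C f * s := by
  rw [AlgHom.commutes, Module.algebraMap_end_apply, MvPolynomial.smul_eq_C_mul]

lemma smul_S (a : K) (s : S K n) : a • s = C (C a) * s := by
  rw [← MvPolynomial.smul_eq_C_mul, ← MvPolynomial.algebraMap_eq, algebraMap_smul]

lemma rhoF_smul (α β : K) (φ : MvPolynomial (Fin n) K) (a : K) (x : F K n) (s : S K n) :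
    rhoF α β φ (a • x) s = C (C a) * rhoF α β φ x s := by
  rw [← smul_S, ← LinearMap.smul_apply]
  congr 1
  exact map_smul ((rhoF α β φ).restrictScalars K) a x

lemma rhoF_rel (α β : K) (hβ : β ≠ 0) (φ : MvPolynomial (Fin n) K) (a b : F K n)
    (h : Rel α β φ a b) : rhoF α β φ a = rhoF α β φ b := by
  cases h
  · refine LinearMap.ext fun s => ?_
    simp only [map_add, map_mul, LinearMap.add_apply, rhoF_smul, Module.End.mul_apply, rhoF_u,
      rhoF_d, rhoF_C, sig_X0, sig_X1, sig_tau α β hβ, tau_sig α β hβ]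
    ring
  · refine LinearMap.ext fun s => ?_
    simp only [map_add, map_mul, LinearMap.add_apply, rhoF_smul, Module.End.mul_apply, rhoF_u,
      rhoF_d, rhoF_C, sig_X0, sig_X1, sig_tau α β hβ, tau_sig α β hβ, tau_X0, tau_X1, tau_C, map_sub, sig_C]
    linear_combination (X 0 * X 1 * tau α β φ s -(X 0 * (X 1 - C (C α) * X 0 - C φ) * tau α β φ s) : S K n) *
      C_C_inv (n := n) β hβ

noncomputable def rho (α β : K) (hβ : β ≠ 0) (φ : MvPolynomial (Fin n) K) :
    A α β φ →ₐ[K] Module.End (MvPolynomial (Fin n) K) (S K n) :=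
  RingQuot.liftAlgHom K ⟨(rhoF α β φ).restrictScalars K, fun _ _ h => rhoF_rel α β hβ φ _ _ h⟩

lemma rho_mk (α β : K) (hβ : β ≠ 0) (φ : MvPolynomial (Fin n) K) (x : F K n) :
    rho α β hβ φ (RingQuot.mkAlgHom K _ x) = rhoF α β φ x := by
  exact RingQuot.liftAlgHom_mkAlgHom_apply K _ _ x

lemma rho_UD (α β : K) (hβ : β ≠ 0) (φ : MvPolynomial (Fin n) K) :
    rho α β hβ φ (U α β φ * D α β φ) = LinearMap.mulLeft _ (X 0) := by
  refine LinearMap.ext fun s => ?_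
  simp only [map_mul, U, D, rho_mk, Module.End.mul_apply, rhoF_u, rhoF_d, tau_sig α β hβ,
    LinearMap.mulLeft_apply]

lemma rho_DU (α β : K) (hβ : β ≠ 0) (φ : MvPolynomial (Fin n) K) :
    rho α β hβ φ (D α β φ * U α β φ) = LinearMap.mulLeft _ (X 1) := by
  refine LinearMap.ext fun s => ?_
  simp only [map_mul, U, D, rho_mk, Module.End.mul_apply, rhoF_u, rhoF_d, sig_tau α β hβ,
    LinearMap.mulLeft_apply, sig_X0]

lemma rho_T (α β : K) (hβ : β ≠ 0) (φ f : MvPolynomial (Fin n) K) (s : S K n) :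
    rho α β hβ φ (T α β φ f) s = C f * s := by
  rw [← rhoF_C α β φ, ← rho_mk α β hβ]
  rfl

lemma T_commute (α β : K) (φ f : MvPolynomial (Fin n) K) (x : F K n) :
    Commute (RingQuot.mkAlgHom K (Rel α β φ) x) (T α β φ f) := by
  have h : Commute x (algebraMap _ _ f) := (Algebra.commutes f x).symm
  exact h.map (RingQuot.mkAlgHom K (Rel α β φ))

lemma rel_ddu_s8 (α β : K) (φ : MvPolynomial (Fin n) K) :
    D α β φ * D α β φ * U α β φ = α • (D α β φ * U α β φ * D α β φ)
      + β • (U α β φ * D α β φ * D α β φ) + T α β φ φ * D α β φ := by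
  have h := RingQuot.mkAlgHom_rel K (Rel.ddu (α := α) (β := β) (φ := φ))
  simp only [map_add, map_mul, map_smul] at h
  exact h

lemma rel_duu_s8 (α β : K) (φ : MvPolynomial (Fin n) K) :
    D α β φ * U α β φ * U α β φ = α • (U α β φ * D α β φ * U α β φ)
      + β • (U α β φ * U α β φ * D α β φ) + U α β φ * T α β φ φ := by
  have h := RingQuot.mkAlgHom_rel K (Rel.duu (α := α) (β := β) (φ := φ))
  simp only [map_add, map_mul, map_smul] at h
  exact h

lemma linInd_S : LinearIndependent K (fun p : ℕ × ℕ × (Fin n →₀ ℕ) =>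
    ((X 0) ^ p.1 * ((X 1) ^ p.2.1 * C (monomial p.2.2 1)) : S K n)) := by
  have h := ((basisMonomials (Fin n) K).smulTower
    (basisMonomials (Fin 2) (MvPolynomial (Fin n) K))).linearIndependent
  let g : ℕ × ℕ × (Fin n →₀ ℕ) → (Fin n →₀ ℕ) × (Fin 2 →₀ ℕ) := fun p =>
    (p.2.2, Finsupp.single 0 p.1 + Finsupp.single 1 p.2.1)
  have hg : Function.Injective g := by
    rintro ⟨i, j, m⟩ ⟨i', j', m'⟩ e
    simp only [g, Prod.mk.injEq] at e
    obtain ⟨e1, e2⟩ := e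
    have h0 := DFunLike.congr_fun e2 0
    have h1 := DFunLike.congr_fun e2 1
    simp at h0 h1
    simp [e1, h0, h1]
  have e : (fun p : ℕ × ℕ × (Fin n →₀ ℕ) =>
      ((X 0) ^ p.1 * ((X 1) ^ p.2.1 * C (monomial p.2.2 1)) : S K n)) =
      ((basisMonomials (Fin n) K).smulTower
        (basisMonomials (Fin 2) (MvPolynomial (Fin n) K))) ∘ g := by
    funext p
    simp only [g, Function.comp, Module.Basis.smulTower_apply, coe_basisMonomials,
      MvPolynomial.smul_eq_C_mul, X_pow_eq_monomial]
    rw [mul_comm _ (C _), mul_left_comm, monomial_mul, one_mul]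
  rw [e]
  exact h.comp g hg

end DownUp

open DownUp MvPolynomial in
/-- If β ≠ 0, the elements ud, du, t₁,…,tₙ of A(α,β,φ) commute pairwise and are
algebraically independent over K: the monomials `(ud)ⁱ(du)ʲ t^m` are
K-linearly independent, so K[ud,du,t₁,…,tₙ] is a polynomial ring in n+2
indeterminates. -/
theorem downUp_ud_du_polynomial {K : Type} [Field K] {n : ℕ}
    (α β : K) (hβ : β ≠ 0) (φ : MvPolynomial (Fin n) K) :
    Commute (U α β φ * D α β φ) (D α β φ * U α β φ) ∧
    (∀ f : MvPolynomial (Fin n) K,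
      Commute (U α β φ * D α β φ) (T α β φ f) ∧
      Commute (D α β φ * U α β φ) (T α β φ f)) ∧
    LinearIndependent K (fun p : ℕ × ℕ × (Fin n →₀ ℕ) =>
      (U α β φ * D α β φ) ^ p.1 * (D α β φ * U α β φ) ^ p.2.1
        * T α β φ (monomial p.2.2 1)) := by
  refine ⟨?_, ?_, ?_⟩
  · have h1 : U α β φ * T α β φ φ = T α β φ φ * U α β φ := T_commute α β φ φ uF
    have e1 : U α β φ * D α β φ * (D α β φ * U α β φ)
        = U α β φ * (D α β φ * D α β φ * U α β φ) := by simp only [mul_assoc]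
    have e2 : D α β φ * U α β φ * (U α β φ * D α β φ)
        = D α β φ * U α β φ * U α β φ * D α β φ := by simp only [mul_assoc]
    rw [commute_iff_eq, e1, e2, rel_ddu_s8, rel_duu_s8]
    simp only [mul_add, add_mul, mul_smul_comm, smul_mul_assoc, mul_assoc]
  · intro f
    have hu : Commute (U α β φ) (T α β φ f) := T_commute α β φ f uF
    have hd : Commute (D α β φ) (T α β φ f) := T_commute α β φ f dF
    exact ⟨hu.mul_left hd, hd.mul_left hu⟩
  · let ev : A α β φ →ₗ[K] S K n :=
      { toFun := fun a => rho α β hβ φ a 1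
        map_add' := fun a b => by rw [map_add, LinearMap.add_apply]
        map_smul' := fun c a => by rw [map_smul, LinearMap.smul_apply, RingHom.id_apply] }
    apply LinearIndependent.of_comp ev
    convert linInd_S (K := K) (n := n) using 1
    funext p
    change rho α β hβ φ _ 1 = _
    rw [map_mul, map_mul, map_pow, map_pow, rho_UD, rho_DU, LinearMap.pow_mulLeft,
      LinearMap.pow_mulLeft, Module.End.mul_apply, Module.End.mul_apply, rho_T,
      LinearMap.mulLeft_apply, LinearMap.mulLeft_apply, mul_one]
end
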